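/- Let x₀ < ⋯ < xₙ be real nodes, let x̂₀ = x₀ < x̂₁ < ⋯ < x̂_{n−1} < x̂ₙ = xₙ, let y ∈ ℝ^{n+1}, and set z_k = z_k(x, x̂). Assume Λ(x̂)·‖z‖_∞ < 1, where Λ(x̂) is the Lebesgue constant of x̂ over [x₀, xₙ]. Then for every t ∈ [x₀, xₙ] distinct from all x̂_k there exists y′ ∈ ℝ^{n+1} such that q(t; x̂, y, λ(x)) = P_{y′}(t) and, for every k, |y′_k − y_k| ≤ ((|z_k| + Λ(x̂)‖z‖_∞)/(1 − Λ(x̂)‖z‖_∞))·|y_k|. -/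

import Mathlib

/-- Barycentric weight `λ_k(x) = 1 / ∏_{j ≠ k} (x_k - x_j)`. -/
noncomputable def lam {n : ℕ} (x : Fin (n + 1) → ℝ) (k : Fin (n + 1)) : ℝ :=
  (∏ j ∈ Finset.univ.erase k, (x k - x j))⁻¹

/-- Relative error in the weights `z_k(x, x̂)`. -/
noncomputable def zk {n : ℕ} (x xh : Fin (n + 1) → ℝ) (k : Fin (n + 1)) : ℝ :=
  (lam x k - lam xh k) / lam xh k

/-- The second barycentric formula `q(t; x̂, y, w)`. -/
noncomputable def secondForm {n : ℕ} (xh y w : Fin (n + 1) → ℝ) (t : ℝ) : ℝ :=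
  (∑ k, w k * y k / (t - xh k)) / (∑ k, w k / (t - xh k))

/-- The Lebesgue constant of the node family `v` over the interval `[a, b]`. -/
noncomputable def leb {ι : Type*} [Fintype ι] [DecidableEq ι] (v : ι → ℝ) (a b : ℝ) : ℝ :=
  ⨆ t : Set.Icc a b, ∑ k, |(Lagrange.basis Finset.univ v k).eval (t : ℝ)|

/-!
Write `w = λ(x̂) (1 + z)` for the weights and `P_r` for the interpolant of `r` at the nodes `x̂`. By
the first barycentric formula, applied to both the numerator and the denominator,
`q(t; x̂, y, w) = P_{(1 + z) y}(t) / P_{1 + z}(t)`, and `P_{1 + z}(t) = 1 + P_z(t)`. Since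
`|P_z(t)| ≤ Λ ‖z‖ < 1`, the denominator is nonzero, and by linearity of interpolation the quotient
is `P_{y'}(t)` for `y' = (1 + z) y / (1 + P_z(t))`, a small relative perturbation of `y`.
-/

open Polynomial

lemma abs_one_add_div_one_add_mul_sub_le {F : Type*} [Field F] [LinearOrder F]
    [IsStrictOrderedRing F] {p M : F} (hp : |p| ≤ M) (hM : M < 1) (z y : F) :
    |(1 + z) / (1 + p) * y - y| ≤ (|z| + M) / (1 - M) * |y| := by
  have hden : 1 - M ≤ 1 + p := by linarith [neg_le_of_abs_le hp]
  have hpos : 0 < 1 + p := by linarith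
  have hnum : |z - p| ≤ |z| + M := (abs_sub z p).trans (by gcongr)
  have hdiff : (1 + z) / (1 + p) * y - y = (z - p) / (1 + p) * y := by
    field_simp
    ring
  rw [hdiff, abs_mul, abs_div, abs_of_pos hpos]
  exact mul_le_mul_of_nonneg_right
    (div_le_div₀ ((abs_nonneg _).trans hnum) hnum (sub_pos.2 hM) hden) (abs_nonneg y)

section Interpolation

variable {ι F : Type*} [DecidableEq ι] [Field F] {s : Finset ι} {v : ι → F}

lemma eval_interpolate_one_add (hv : Set.InjOn v s) (hs : s.Nonempty) (z : ι → F) (t : F) :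
    (Lagrange.interpolate s v (1 + z)).eval t = 1 + (Lagrange.interpolate s v z).eval t := by
  rw [map_add, Lagrange.interpolate_one hv hs, eval_add, eval_one]

lemma abs_eval_interpolate_le [LinearOrder F] [IsStrictOrderedRing F] {r : ι → F} {M : F}
    (hr : ∀ i ∈ s, |r i| ≤ M) (t : F) :
    |(Lagrange.interpolate s v r).eval t| ≤ (∑ i ∈ s, |(Lagrange.basis s v i).eval t|) * M := by
  simp only [Lagrange.interpolate_apply, eval_finsetSum, eval_mul, eval_C]
  calc |∑ i ∈ s, r i * (Lagrange.basis s v i).eval t|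
      ≤ ∑ i ∈ s, |r i * (Lagrange.basis s v i).eval t| := Finset.abs_sum_le_sum_abs _ _
    _ ≤ ∑ i ∈ s, |(Lagrange.basis s v i).eval t| * M := Finset.sum_le_sum fun i hi => by
        rw [abs_mul, mul_comm]
        exact mul_le_mul_of_nonneg_left (hr i hi) (abs_nonneg _)
    _ = (∑ i ∈ s, |(Lagrange.basis s v i).eval t|) * M := (Finset.sum_mul _ _ _).symm

end Interpolation

section LebesgueConstant

variable {ι : Type*} [Fintype ι] [DecidableEq ι] (v : ι → ℝ) {a b t : ℝ}

/-- Compactness of `[a, b]` makes the supremum in `leb` a genuine one. -/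
lemma sum_abs_eval_basis_le_leb (ht : t ∈ Set.Icc a b) :
    ∑ k, |(Lagrange.basis Finset.univ v k).eval t| ≤ leb v a b := by
  have hcont : Continuous fun u : Set.Icc a b =>
      ∑ k, |(Lagrange.basis Finset.univ v k).eval (u : ℝ)| := by
    fun_prop
  exact le_ciSup (isCompact_range hcont).bddAbove ⟨t, ht⟩

lemma abs_eval_interpolate_le_leb_mul_sup' [Nonempty ι] (r : ι → ℝ) (ht : t ∈ Set.Icc a b) :
    |(Lagrange.interpolate Finset.univ v r).eval t| ≤
      leb v a b * Finset.univ.sup' Finset.univ_nonempty fun k => |r k| := by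
  have hr (k : ι) : |r k| ≤ Finset.univ.sup' Finset.univ_nonempty fun k => |r k| :=
    Finset.le_sup' (fun k => |r k|) (Finset.mem_univ k)
  have hsup := (abs_nonneg _).trans (hr (Classical.arbitrary ι))
  exact (abs_eval_interpolate_le (fun k _ => hr k) t).trans
    (mul_le_mul_of_nonneg_right (sum_abs_eval_basis_le_leb v ht) hsup)

end LebesgueConstant

section Barycentric

variable {n : ℕ} {xh : Fin (n + 1) → ℝ}

lemma lam_eq_nodalWeight (x : Fin (n + 1) → ℝ) : lam x = Lagrange.nodalWeight Finset.univ x :=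
  funext fun _ => (Finset.prod_inv_distrib _).symm

lemma lam_ne_zero (hxh : Function.Injective xh) (k : Fin (n + 1)) : lam xh k ≠ 0 := by
  rw [lam_eq_nodalWeight]
  exact Lagrange.nodalWeight_ne_zero hxh.injOn (Finset.mem_univ k)

lemma lam_eq_lam_mul_one_add_zk (x : Fin (n + 1) → ℝ) (hxh : Function.Injective xh) :
    lam x = lam xh * (1 + zk x xh) := by
  ext k
  have hlam := lam_ne_zero hxh k
  simp only [Pi.mul_apply, Pi.add_apply, Pi.one_apply, zk]
  field_simp
  ring

lemma secondForm_lam_mul (y u : Fin (n + 1) → ℝ) {t : ℝ} (ht : ∀ k, t ≠ xh k) :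
    secondForm xh y (lam xh * u) t =
      (Lagrange.interpolate Finset.univ xh (u * y)).eval t /
        (Lagrange.interpolate Finset.univ xh u).eval t := by
  have hnodal : (Lagrange.nodal Finset.univ xh).eval t ≠ 0 :=
    Lagrange.eval_nodal_not_at_node fun k _ => ht k
  rw [Lagrange.eval_interpolate_not_at_node _ fun k _ => ht k,
    Lagrange.eval_interpolate_not_at_node _ fun k _ => ht k, mul_div_mul_left _ _ hnodal,
    ← lam_eq_nodalWeight, secondForm]
  congr! 2 with k _ k _ <;> simp only [Pi.mul_apply] <;> ring

theorem stmt_6_general (y : Fin (n + 1) → ℝ) {w z : Fin (n + 1) → ℝ}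
    (hxh : Function.Injective xh) (hw : w = lam xh * (1 + z)) {a b t : ℝ}
    (hsmall : leb xh a b * (Finset.univ.sup' Finset.univ_nonempty fun k => |z k|) < 1)
    (ht : t ∈ Set.Icc a b) (ht' : ∀ k, t ≠ xh k) :
    ∃ y' : Fin (n + 1) → ℝ,
      secondForm xh y w t = (Lagrange.interpolate Finset.univ xh y').eval t ∧
      ∀ k, |y' k - y k| ≤
        ((|z k| + leb xh a b * (Finset.univ.sup' Finset.univ_nonempty fun i => |z i|)) /
          (1 - leb xh a b * (Finset.univ.sup' Finset.univ_nonempty fun i => |z i|))) * |y k| := by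
  set p := (Lagrange.interpolate Finset.univ xh z).eval t with hp
  have hp_le := abs_eval_interpolate_le_leb_mul_sup' xh z ht
  have hsmul : (fun k => (1 + z k) / (1 + p) * y k) = (1 + p)⁻¹ • ((1 + z) * y) := by
    ext k
    simp only [Pi.smul_apply, Pi.mul_apply, Pi.add_apply, Pi.one_apply, smul_eq_mul]
    ring
  refine ⟨fun k => (1 + z k) / (1 + p) * y k, ?_,
    fun k => abs_one_add_div_one_add_mul_sub_le hp_le hsmall (z k) (y k)⟩
  rw [hw, secondForm_lam_mul y _ ht', eval_interpolate_one_add hxh.injOn Finset.univ_nonempty,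
    ← hp, hsmul, map_smul, eval_smul, smul_eq_mul, div_eq_inv_mul]

end Barycentric

theorem stmt_6 {n : ℕ} (x xh y : Fin (n + 1) → ℝ)
    (hx : StrictMono x) (hxh : StrictMono xh)
    (h0 : xh 0 = x 0) (hn : xh (Fin.last n) = x (Fin.last n))
    (hsmall : leb xh (x 0) (x (Fin.last n)) *
      (Finset.univ.sup' Finset.univ_nonempty fun k => |zk x xh k|) < 1)
    (t : ℝ) (ht : t ∈ Set.Icc (x 0) (x (Fin.last n))) (ht' : ∀ k, t ≠ xh k) :
    ∃ y' : Fin (n + 1) → ℝ,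
      secondForm xh y (lam x) t = (Lagrange.interpolate Finset.univ xh y').eval t ∧
      ∀ k, |y' k - y k| ≤
        ((|zk x xh k| + leb xh (x 0) (x (Fin.last n)) *
            (Finset.univ.sup' Finset.univ_nonempty fun i => |zk x xh i|)) /
          (1 - leb xh (x 0) (x (Fin.last n)) *
            (Finset.univ.sup' Finset.univ_nonempty fun i => |zk x xh i|))) * |y k| :=
  stmt_6_general y hxh.injective (lam_eq_lam_mul_one_add_zk x hxh.injective) hsmall ht ht'
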